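/- Let G be a concurrent game structure with boolean reward function and let X* = νX.μY.νZ.ASP(X,Y,Z). Then X* ⊆ Almost₁(LimInfAvg(1)), i.e., from every state of X* player 1 has a strategy ensuring with probability 1 against every player-2 strategy that the limit-inferior average reward equals 1. -/

import Mathlib

/-!
The stages of the least fixpoint in `Y` give each state of `X*` a rank (`exists_rank`). In a state
of `X*` player 1 has a safe action such that each opponent move either yields reward one without
increasing the rank, or is such that some safe action reaches a smaller rank with positive
probability. For a precision `η`, player 1 plays the first action with probability `1 - ε` and
otherwise explores all safe actions uniformly, where `ε` depends on `η` and on the rank. There is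
then a bounded nonnegative potential `D`, decreasing in the rank, such that the expected loss (one
minus the reward) of a round is at most `η` plus the expected increase of `D`
(`exists_potential`). Both `ε` and `D` come from the recursion `eSeq`.

To reach average exactly one, the precision `1 / (κ n + 1)` used in round `n` tends to zero, so
slowly that the potential stays `O(n ^ (1 / 8))` (`exists_slow`). Because `D` grows as the
precision shrinks, total loss minus summed precisions minus current potential (`proc`) is a
supermartingale. The fourth moment of its positive part after `N` rounds is `O(N ^ (5 / 2))`
(`Ex_fourth_le`), so by Markov's inequality and Borel–Cantelli it is almost surely at most `o(N)`,
and hence the total loss is `o(N)`.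

The probability is an outer measure built from cylinders. A compactness argument shows that the
whole space has mass one (`one_le_prOuter_univ`), so it suffices to show that the complement of the
event is null; this only needs expectations over finite histories (`Ex`).
-/

open scoped Classical ENNReal
open Filter

/-- A concurrent stochastic game structure `G = (S, A, Γ₁, Γ₂, δ)` together with a
boolean reward function `r : S × A × A → {0,1}`. -/
structure CGS where
  /-- finite state space -/
  S : Type
  /-- finite action space -/
  A : Type
  [fintypeS : Fintype S]
  [fintypeA : Fintype A]
  [decS : DecidableEq S]
  [decA : DecidableEq A]
  [nonemptyS : Nonempty S]
  /-- moves available to player 1 -/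
  moves1 : S → Finset A
  /-- moves available to player 2 -/
  moves2 : S → Finset A
  moves1_nonempty : ∀ s, (moves1 s).Nonempty
  moves2_nonempty : ∀ s, (moves2 s).Nonempty
  /-- probabilistic transition function -/
  trans : S → A → A → PMF S
  /-- reward function -/
  reward : S → A → A → ℝ
  /-- the reward function is boolean -/
  reward_bool : ∀ s a b, reward s a b = 0 ∨ reward s a b = 1

attribute [instance] CGS.fintypeS CGS.fintypeA CGS.decS CGS.decA CGS.nonemptyS

namespace CGS

variable (G : CGS)

/-- One round: a state together with the actions chosen by the two players. -/
abbrev Move := G.S × G.A × G.A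

/-- A finite history. -/
abbrev Hist := List G.Move

/-- A play (we allow arbitrary infinite sequences; invalid ones get probability 0). -/
abbrev Play := ℕ → G.Move

/-- A (behavioral) strategy whose moves are restricted to `moves`. -/
structure Strategy (moves : G.S → Finset G.A) where
  play : G.Hist → G.S → PMF G.A
  play_mem : ∀ h s a, play h s a ≠ 0 → a ∈ moves s

/-- A strategy for player 1. -/
abbrev Strategy1 := G.Strategy G.moves1
/-- A strategy for player 2. -/
abbrev Strategy2 := G.Strategy G.moves2

variable {G}

/-- A stationary (memoryless) strategy. -/
def Strategy.Stationary {mv : G.S → Finset G.A} (σ : G.Strategy mv) : Prop :=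
  ∀ h h' s, σ.play h s = σ.play h' s

/-- A Markov strategy: depends only on the length of the history and current state. -/
def Strategy.Markov {mv : G.S → Finset G.A} (σ : G.Strategy mv) : Prop :=
  ∀ h h' s, h.length = h'.length → σ.play h s = σ.play h' s

/-- The patience of a strategy: the inverse of the minimum nonzero probability
assigned to an action. -/
noncomputable def Strategy.patience {mv : G.S → Finset G.A} (σ : G.Strategy mv) : ℝ≥0∞ :=
  ⨆ h, ⨆ s, ⨆ a, if σ.play h s a = 0 then 0 else (σ.play h s a)⁻¹

/-- Probability that the play follows exactly the finite prefix `w`, starting at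
state `s` after past history `h`, when the players use `σ1` and `σ2`. -/
noncomputable def prefProb (σ1 : G.Strategy1) (σ2 : G.Strategy2) :
    G.Hist → G.S → List G.Move → ℝ≥0∞
  | _, _, [] => 1
  | h, s, (t, a, b) :: w =>
      if t = s then
        σ1.play h s a * σ2.play h s b *
          (match w with
            | [] => 1
            | (t', _, _) :: _ =>
                G.trans s a b t' * prefProb σ1 σ2 (h ++ [(s, a, b)]) t' w)
      else 0

/-- The cylinder of plays extending a given finite prefix. -/
def cyl (n : ℕ) (w : Fin n → G.Move) : Set G.Play := {ρ | ∀ i : Fin n, ρ i.1 = w i}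

/-- Pre-measure of a set of plays: the infimum, over resolutions `n`, of the total
probability of the length-`n` prefixes meeting the set. -/
noncomputable def preMeas (σ1 : G.Strategy1) (σ2 : G.Strategy2) (s : G.S)
    (U : Set G.Play) : ℝ≥0∞ :=
  ⨅ n : ℕ, ∑ w : Fin n → G.Move,
    if (cyl n w ∩ U).Nonempty then prefProb σ1 σ2 [] s (List.ofFn w) else 0

lemma preMeas_empty (σ1 : G.Strategy1) (σ2 : G.Strategy2) (s : G.S) :
    preMeas σ1 σ2 s (∅ : Set G.Play) = 0 := by
  simp [preMeas]

/-- The probability distribution over plays from `s` under `σ1, σ2`, obtained by the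
Carathéodory construction from cylinder probabilities (this agrees with the
Ionescu–Tulcea measure on all measurable sets). -/
noncomputable def prOuter (σ1 : G.Strategy1) (σ2 : G.Strategy2) (s : G.S) :
    MeasureTheory.OuterMeasure G.Play :=
  MeasureTheory.OuterMeasure.ofFunction (preMeas σ1 σ2 s) (preMeas_empty σ1 σ2 s)

/-- `Pr_s^{σ1,σ2}(Φ)`. -/
noncomputable def pr (σ1 : G.Strategy1) (σ2 : G.Strategy2) (s : G.S)
    (Φ : Set G.Play) : ℝ≥0∞ :=
  prOuter σ1 σ2 s Φ

variable (G)

/-- Average reward over the first `n` rounds of a play. -/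
noncomputable def avg (ρ : G.Play) (n : ℕ) : ℝ :=
  (∑ i ∈ Finset.range n, G.reward (ρ i).1 (ρ i).2.1 (ρ i).2.2) / n

/-- `LimInfAvg` of a play. -/
noncomputable def limInfAvg (ρ : G.Play) : ℝ := Filter.atTop.liminf (G.avg ρ)

/-- `LimSupAvg` of a play. -/
noncomputable def limSupAvg (ρ : G.Play) : ℝ := Filter.atTop.limsup (G.avg ρ)

/-- The event `LimInfAvg(λ) = {ρ : LimInfAvg(ρ) ≥ λ}`. -/
def evLimInfAvgGe (lam : ℝ) : Set G.Play := {ρ | lam ≤ G.limInfAvg ρ}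
/-- The event `LimSupAvg(λ) = {ρ : LimSupAvg(ρ) ≥ λ}`. -/
def evLimSupAvgGe (lam : ℝ) : Set G.Play := {ρ | lam ≤ G.limSupAvg ρ}
/-- The event `{ρ : LimInfAvg(ρ) ≤ λ}`. -/
def evLimInfAvgLe (lam : ℝ) : Set G.Play := {ρ | G.limInfAvg ρ ≤ lam}
/-- The event `{ρ : LimSupAvg(ρ) ≤ λ}`. -/
def evLimSupAvgLe (lam : ℝ) : Set G.Play := {ρ | G.limSupAvg ρ ≤ lam}
/-- The event `{ρ : LimInfAvg(ρ) < λ}`. -/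
def evLimInfAvgLt (lam : ℝ) : Set G.Play := {ρ | G.limInfAvg ρ < lam}
/-- The event `{ρ : LimSupAvg(ρ) < λ}`. -/
def evLimSupAvgLt (lam : ℝ) : Set G.Play := {ρ | G.limSupAvg ρ < lam}

/-- The safety event: all states of the play lie in `F`. -/
def safe (F : Set G.S) : Set G.Play := {ρ | ∀ i, (ρ i).1 ∈ F}

/-- Almost-sure winning set for player 1. -/
def Almost1 (Φ : Set G.Play) : Set G.S :=
  {s | ∃ σ1 : G.Strategy1, ∀ σ2 : G.Strategy2, pr σ1 σ2 s Φ = 1}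
/-- Positive winning set for player 1. -/
def Positive1 (Φ : Set G.Play) : Set G.S :=
  {s | ∃ σ1 : G.Strategy1, ∀ σ2 : G.Strategy2, 0 < pr σ1 σ2 s Φ}
/-- Almost-sure winning set for player 2. -/
def Almost2 (Φ : Set G.Play) : Set G.S :=
  {s | ∃ σ2 : G.Strategy2, ∀ σ1 : G.Strategy1, pr σ1 σ2 s Φ = 1}
/-- Positive winning set for player 2. -/
def Positive2 (Φ : Set G.Play) : Set G.S :=
  {s | ∃ σ2 : G.Strategy2, ∀ σ1 : G.Strategy1, 0 < pr σ1 σ2 s Φ}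

/-- `n`, the number of states. -/
def nS : ℕ := Fintype.card G.S

/-- `m`, the maximal number of actions available to a player at a state. -/
def mA : ℕ := Finset.univ.sup fun s => max (G.moves1 s).card (G.moves2 s).card

/-- `δ_min`, the minimum nonzero transition probability. -/
noncomputable def deltaMin : ℝ :=
  sInf {x : ℝ | 0 < x ∧ ∃ s a b t, a ∈ G.moves1 s ∧ b ∈ G.moves2 s ∧
    ((G.trans s a b) t).toReal = x}

end CGS

namespace CGS

variable (G : CGS)

/-- `Allow₁(s,X)`: player-1 actions that keep the play inside `X`. -/
def allow1 (s : G.S) (X : Set G.S) : Set G.A :=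
  {a | a ∈ G.moves1 s ∧ ∀ b ∈ G.moves2 s, (G.trans s a b).support ⊆ X}

/-- `Bad₂(s,X,Y)`. -/
def bad2 (s : G.S) (X Y : Set G.S) : Set G.A :=
  {b | b ∈ G.moves2 s ∧ ∃ a ∈ G.allow1 s X, ((G.trans s a b).support ∩ Y).Nonempty}

/-- `Good₁(s,X,Y,Z)`. -/
def good1 (s : G.S) (X Y Z : Set G.S) : Set G.A :=
  {a | a ∈ G.allow1 s X ∧ ∀ b ∈ G.moves2 s, b ∉ G.bad2 s X Y →
      (G.trans s a b).support ⊆ Z ∧ G.reward s a b = 1}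

/-- The predecessor operator `ASP(X,Y,Z)`. -/
def ASP (X Y Z : Set G.S) : Set G.S := {s | (G.good1 s X Y Z).Nonempty}

/-- Greatest fixpoint (ν) of a monotone operator on sets, via Knaster–Tarski. -/
def gfpS {α : Type*} (f : Set α → Set α) : Set α := ⋃₀ {X | X ⊆ f X}

/-- Least fixpoint (μ) of a monotone operator on sets, via Knaster–Tarski. -/
def lfpS {α : Type*} (f : Set α → Set α) : Set α := ⋂₀ {X | f X ⊆ X}

/-- `X* = νX. μY. νZ. ASP(X,Y,Z)`. -/
def Xstar : Set G.S :=
  gfpS fun X => lfpS fun Y => gfpS fun Z => G.ASP X Y Z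

/-- `Y* = μY. νZ. ASP(S,Y,Z)`. -/
def Ystar : Set G.S :=
  lfpS fun Y => gfpS fun Z => G.ASP Set.univ Y Z

end CGS

namespace CGS

variable {G : CGS}

/-! ### Path probabilities -/

lemma prefProb_cons (σ1 : G.Strategy1) (σ2 : G.Strategy2) (h : G.Hist) (s : G.S)
    (x : G.Move) (w : List G.Move) :
    prefProb σ1 σ2 h s (x :: w) =
      if x.1 = s then σ1.play h s x.2.1 * σ2.play h s x.2.2 *
        ∑ t, G.trans s x.2.1 x.2.2 t * prefProb σ1 σ2 (h ++ [(s, x.2.1, x.2.2)]) t w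
      else 0 := by
  obtain ⟨u, a, b⟩ := x
  cases w with
  | nil =>
    have h1 : ∑ t, G.trans s a b t = 1 := by
      rw [← tsum_fintype (L := .unconditional _)]; exact (G.trans s a b).tsum_coe
    simp [prefProb, h1]
  | cons y w =>
    obtain ⟨t', a', b'⟩ := y
    rw [prefProb]
    refine if_congr Iff.rfl ?_ rfl
    congr 1
    rw [Finset.sum_eq_single t']
    · intro t _ ht
      simp [prefProb, ht.symm]
    · simp

lemma pmf_sum {α : Type*} [Fintype α] (p : PMF α) : ∑ a, p a = 1 := by
  rw [← tsum_fintype (L := .unconditional _)]; exact p.tsum_coe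

lemma pmf_sum_toReal {α : Type*} [Fintype α] (p : PMF α) : ∑ a, (p a).toReal = 1 := by
  rw [← ENNReal.toReal_sum (fun a _ => p.apply_ne_top a), pmf_sum]; simp

lemma prefProb_ne_top (σ1 : G.Strategy1) (σ2 : G.Strategy2) (w : List G.Move) :
    ∀ (h : G.Hist) (s : G.S), prefProb σ1 σ2 h s w ≠ ⊤ := by
  induction w with
  | nil => intro h s; simp [prefProb]
  | cons x w ih =>
    intro h s
    rw [prefProb_cons]
    split_ifs
    · refine ENNReal.mul_ne_top (ENNReal.mul_ne_top (PMF.apply_ne_top _ _)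
        (PMF.apply_ne_top _ _)) ?_
      exact ENNReal.sum_ne_top.2 fun t _ => ENNReal.mul_ne_top (PMF.apply_ne_top _ _) (ih _ _)
    · simp

/-- Consistency of the path probabilities: those of the one-step extensions add up. -/
lemma sum_prefProb_snoc (σ1 : G.Strategy1) (σ2 : G.Strategy2) (w : List G.Move) :
    ∀ (h : G.Hist) (s : G.S),
      ∑ x : G.Move, prefProb σ1 σ2 h s (w ++ [x]) = prefProb σ1 σ2 h s w := by
  induction w with
  | nil =>
    intro h s
    simp only [List.nil_append, prefProb_cons, Fintype.sum_prod_type]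
    simp only [prefProb, mul_one, pmf_sum]
    rw [Finset.sum_eq_single s]
    · simp [← Finset.mul_sum, pmf_sum]
    · intro b _ hb; simp [hb]
    · simp
  | cons y w ih =>
    intro h s
    simp only [List.cons_append, prefProb_cons]
    split_ifs
    · rw [← Finset.mul_sum, Finset.sum_comm]
      simp_rw [← Finset.mul_sum, ih]
    · simp

/-! ### The outer measure has total mass one -/

/-- Total probability of the length-`n` prefixes meeting `U`; `preMeas` is its infimum over `n`. -/
noncomputable def mass (σ1 : G.Strategy1) (σ2 : G.Strategy2) (s : G.S) (n : ℕ)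
    (U : Set G.Play) : ℝ≥0∞ :=
  ∑ w : Fin n → G.Move,
    if (cyl n w ∩ U).Nonempty then prefProb σ1 σ2 [] s (List.ofFn w) else 0

/-- The union of the length-`n` cylinders that meet `U`. -/
def nbhd (n : ℕ) (U : Set G.Play) : Set G.Play := {ρ | (cyl n (fun i => ρ i.1) ∩ U).Nonempty}

lemma cyl_congr {n : ℕ} {w : Fin n → G.Move} {ρ : G.Play} (h : ρ ∈ cyl n w) :
    (fun i : Fin n => ρ i.1) = w := funext h

lemma nonempty_move : Nonempty G.Move := by
  obtain ⟨s⟩ := G.nonemptyS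
  obtain ⟨a, _⟩ := G.moves1_nonempty s
  exact ⟨(s, a, a)⟩

lemma cyl_nonempty (n : ℕ) (w : Fin n → G.Move) : (cyl n w).Nonempty := by
  obtain ⟨x⟩ := nonempty_move (G := G)
  exact ⟨fun i => if h : i < n then w ⟨i, h⟩ else x, fun i => by simp⟩

lemma cyl_inter_nbhd (n : ℕ) (w : Fin n → G.Move) (U : Set G.Play) :
    (cyl n w ∩ nbhd n U).Nonempty ↔ (cyl n w ∩ U).Nonempty := by
  constructor
  · rintro ⟨ρ, hρ, h⟩
    have := cyl_congr hρ
    simpa [nbhd, this] using h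
  · rintro ⟨ρ, hρ, h⟩
    refine ⟨ρ, hρ, ρ, fun i => rfl, h⟩

/-- `K` is determined by the first `n` rounds. -/
def DependsOn (n : ℕ) (K : Set G.Play) : Prop :=
  ∀ ρ ρ' : G.Play, (∀ i < n, ρ i = ρ' i) → ρ ∈ K → ρ' ∈ K

lemma dependsOn_nbhd (n : ℕ) (U : Set G.Play) : DependsOn n (nbhd n U) := by
  intro ρ ρ' h hρ
  have : (fun i : Fin n => ρ i.1) = fun i => ρ' i.1 := funext fun i => h i i.2
  simpa [nbhd, this] using hρ

lemma DependsOn.mono {n m : ℕ} (hnm : n ≤ m) {K : Set G.Play} (h : DependsOn n K) :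
    DependsOn m K := fun ρ ρ' h' => h ρ ρ' fun i hi => h' i (hi.trans_le hnm)

lemma mass_succ (σ1 : G.Strategy1) (σ2 : G.Strategy2) (s : G.S) {n : ℕ} {K : Set G.Play}
    (hK : DependsOn n K) : mass σ1 σ2 s (n + 1) K = mass σ1 σ2 s n K := by
  unfold mass
  rw [← (Fin.snocEquiv (fun _ : Fin (n + 1) => G.Move)).sum_comp, Fintype.sum_prod_type,
    Finset.sum_comm]
  refine Finset.sum_congr rfl fun w _ => ?_
  have key : ∀ x : G.Move, (cyl (n + 1) (Fin.snoc (α := fun _ => G.Move) w x) ∩ K).Nonempty ↔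
      (cyl n w ∩ K).Nonempty := by
    intro x
    constructor
    · rintro ⟨ρ, hρ, h⟩
      refine ⟨ρ, fun i => ?_, h⟩
      have := hρ i.castSucc
      simpa using this
    · rintro ⟨ρ, hρ, h⟩
      refine ⟨fun i => if i < n then ρ i else x, fun i => ?_, hK ρ _ (fun i hi => by simp [hi]) h⟩
      refine Fin.lastCases ?_ (fun j => ?_) i
      · simp
      · simpa using hρ j
  simp only [Fin.snocEquiv, Equiv.coe_fn_mk, key]
  split_ifs
  · simp only [List.ofFn_succ', List.concat_eq_append, Fin.snoc_castSucc, Fin.snoc_last]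
    exact sum_prefProb_snoc _ _ _ _ _
  · simp

lemma mass_eq (σ1 : G.Strategy1) (σ2 : G.Strategy2) (s : G.S) {n m : ℕ} (hnm : n ≤ m)
    {K : Set G.Play} (hK : DependsOn n K) : mass σ1 σ2 s m K = mass σ1 σ2 s n K := by
  induction m, hnm using Nat.le_induction with
  | base => rfl
  | succ m hm ih => rw [mass_succ _ _ _ (hK.mono hm), ih]

lemma mass_univ (σ1 : G.Strategy1) (σ2 : G.Strategy2) (s : G.S) (n : ℕ) :
    mass σ1 σ2 s n Set.univ = 1 := by
  rw [mass_eq σ1 σ2 s (K := Set.univ) (Nat.zero_le n) (fun _ _ _ _ => Set.mem_univ _)]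
  have hne : (Set.univ : Set G.Play).Nonempty := (cyl_nonempty 0 Fin.elim0).mono (Set.subset_univ _)
  simp [mass, cyl, prefProb, hne]

lemma mass_le_sum {ι : Type*} (σ1 : G.Strategy1) (σ2 : G.Strategy2) (s : G.S) (n : ℕ)
    (I : Finset ι) (K : ι → Set G.Play) (hI : Set.univ ⊆ ⋃ i ∈ I, K i) :
    1 ≤ ∑ i ∈ I, mass σ1 σ2 s n (K i) := by
  rw [← mass_univ σ1 σ2 s n]
  unfold mass
  rw [Finset.sum_comm]
  refine Finset.sum_le_sum fun w _ => ?_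
  obtain ⟨ρ, hρ⟩ := cyl_nonempty n w
  obtain ⟨i, hi, hρi⟩ := Set.mem_iUnion₂.1 (hI (Set.mem_univ ρ))
  refine le_trans ?_ (Finset.single_le_sum (fun _ _ => zero_le) hi)
  have hne : (cyl n w ∩ K i).Nonempty := ⟨ρ, hρ, hρi⟩
  rw [if_pos hne]
  split_ifs <;> simp

/-- Compactness of the space of plays: countably many sets whose cylinder neighbourhoods cover all
plays have a finite subfamily that does, and finitely many neighbourhoods can be compared at one
common resolution. -/
lemma one_le_prOuter_univ (σ1 : G.Strategy1) (σ2 : G.Strategy2) (s : G.S) :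
    1 ≤ prOuter σ1 σ2 s Set.univ := by
  rw [prOuter, MeasureTheory.OuterMeasure.ofFunction_apply]
  refine le_iInf fun U => le_iInf fun hU => ?_
  refine ENNReal.le_of_forall_pos_le_add fun ε hε _ => ?_
  obtain ⟨ε', hε', hsum⟩ := ENNReal.exists_pos_sum_of_countable
    (ENNReal.coe_pos.2 hε).ne' ℕ
  by_cases htop : ∑' i, preMeas σ1 σ2 s (U i) = ⊤
  · simp [htop]
  have hlt : ∀ i, ∃ n, mass σ1 σ2 s n (U i) < preMeas σ1 σ2 s (U i) + ε' i := by
    intro i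
    have hne : preMeas σ1 σ2 s (U i) ≠ ⊤ := ENNReal.ne_top_of_tsum_ne_top htop i
    exact iInf_lt_iff.1 (ENNReal.lt_add_right hne (ENNReal.coe_pos.2 (hε' i)).ne')
  choose n hn using hlt
  let _ : TopologicalSpace G.Move := ⊥
  have _ : DiscreteTopology G.Move := ⟨rfl⟩
  have hopen : ∀ i, IsOpen (nbhd (n i) (U i)) := by
    intro i
    have : nbhd (n i) (U i) = (fun (ρ : G.Play) (j : Fin (n i)) => ρ j.1) ⁻¹'
        {w | (cyl (n i) w ∩ U i).Nonempty} := rfl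
    rw [this]
    exact (isOpen_discrete _).preimage (by fun_prop)
  have hcov : Set.univ ⊆ ⋃ i, nbhd (n i) (U i) := by
    intro ρ hρ
    obtain ⟨i, hi⟩ := Set.mem_iUnion.1 (hU hρ)
    exact Set.mem_iUnion.2 ⟨i, ρ, fun _ => rfl, hi⟩
  obtain ⟨I, hI⟩ := isCompact_univ.elim_finite_subcover _ hopen hcov
  calc (1 : ℝ≥0∞) ≤ ∑ i ∈ I, mass σ1 σ2 s (I.sup n) (nbhd (n i) (U i)) := mass_le_sum _ _ _ _ I _ hI
    _ = ∑ i ∈ I, mass σ1 σ2 s (n i) (U i) := by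
        refine Finset.sum_congr rfl fun i hi => ?_
        rw [mass_eq σ1 σ2 s (Finset.le_sup hi) (dependsOn_nbhd _ _)]
        simp only [mass, cyl_inter_nbhd]
    _ ≤ ∑ i ∈ I, (preMeas σ1 σ2 s (U i) + ε' i) := Finset.sum_le_sum fun i _ => (hn i).le
    _ ≤ ∑' i, (preMeas σ1 σ2 s (U i) + ε' i) := ENNReal.sum_le_tsum _
    _ = ∑' i, preMeas σ1 σ2 s (U i) + ∑' i, (ε' i : ℝ≥0∞) := ENNReal.tsum_add
    _ ≤ _ := by gcongr

lemma prOuter_le_mass (σ1 : G.Strategy1) (σ2 : G.Strategy2) (s : G.S) (n : ℕ) (U : Set G.Play) :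
    prOuter σ1 σ2 s U ≤ mass σ1 σ2 s n U :=
  (MeasureTheory.OuterMeasure.ofFunction_le U).trans (iInf_le _ n)

lemma pr_eq_one_of_compl (σ1 : G.Strategy1) (σ2 : G.Strategy2) (s : G.S) (Φ : Set G.Play)
    (h : prOuter σ1 σ2 s Φᶜ = 0) : pr σ1 σ2 s Φ = 1 := by
  refine le_antisymm ?_ ?_
  · refine ((prOuter σ1 σ2 s).mono (Set.subset_univ Φ)).trans ?_
    exact (prOuter_le_mass σ1 σ2 s 0 _).trans (mass_univ σ1 σ2 s 0).le
  · have h1 := one_le_prOuter_univ σ1 σ2 s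
    rw [← Set.union_compl_self Φ] at h1
    have h2 := h1.trans (MeasureTheory.measure_union_le Φ Φᶜ)
    rwa [h, add_zero] at h2

/-! ### Expectations over finite histories and a fourth-moment bound -/

/-- Probability that after history `h`, in state `s`, the players choose `y.1`, `y.2.1` and the
game moves to `y.2.2`. -/
noncomputable def wt (σ1 : G.Strategy1) (σ2 : G.Strategy2) (h : G.Hist) (s : G.S)
    (y : G.A × G.A × G.S) : ℝ :=
  (σ1.play h s y.1).toReal * (σ2.play h s y.2.1).toReal * (G.trans s y.1 y.2.1 y.2.2).toReal

/-- Expectation of `f (history) (current state)` after `n` further rounds from `(h, s)`. -/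
noncomputable def Ex (σ1 : G.Strategy1) (σ2 : G.Strategy2) :
    ℕ → G.Hist → G.S → (G.Hist → G.S → ℝ) → ℝ
  | 0, h, s, f => f h s
  | n + 1, h, s, f =>
      ∑ y : G.A × G.A × G.S, wt σ1 σ2 h s y * Ex σ1 σ2 n (h ++ [(s, y.1, y.2.1)]) y.2.2 f

lemma wt_nonneg (σ1 : G.Strategy1) (σ2 : G.Strategy2) (h : G.Hist) (s : G.S)
    (y : G.A × G.A × G.S) : 0 ≤ wt σ1 σ2 h s y := by
  unfold wt; positivity

lemma sum_wt (σ1 : G.Strategy1) (σ2 : G.Strategy2) (h : G.Hist) (s : G.S) :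
    ∑ y, wt σ1 σ2 h s y = 1 := by
  simp only [Fintype.sum_prod_type, wt, ← Finset.mul_sum, pmf_sum_toReal, mul_one]

lemma toReal_prefProb_cons (σ1 : G.Strategy1) (σ2 : G.Strategy2) (h : G.Hist) (s : G.S)
    (x : G.Move) (w : List G.Move) :
    (prefProb σ1 σ2 h s (x :: w)).toReal =
      if x.1 = s then ∑ t, wt σ1 σ2 h s (x.2.1, x.2.2, t) *
        (prefProb σ1 σ2 (h ++ [(s, x.2.1, x.2.2)]) t w).toReal
      else 0 := by
  rw [prefProb_cons]
  split_ifs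
  · rw [ENNReal.toReal_mul, ENNReal.toReal_mul, ENNReal.toReal_sum, Finset.mul_sum]
    · simp [wt, mul_assoc]
    · exact fun t _ => ENNReal.mul_ne_top (PMF.apply_ne_top _ _) (prefProb_ne_top _ _ _ _ _)
  · simp

lemma sum_prefProb_eq_Ex (σ1 : G.Strategy1) (σ2 : G.Strategy2) (f : G.Hist → G.S → ℝ) (n : ℕ) :
    ∀ (h : G.Hist) (s : G.S),
      ∑ w : Fin (n + 1) → G.Move, (prefProb σ1 σ2 h s (List.ofFn w)).toReal *
        f (h ++ List.ofFn fun i : Fin n => w i.castSucc) (w (Fin.last n)).1 =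
      Ex σ1 σ2 n h s f := by
  induction n with
  | zero =>
    intro h s
    rw [← (Equiv.funUnique (Fin 1) G.Move).symm.sum_comp]
    simp only [List.ofFn_succ, List.ofFn_zero, toReal_prefProb_cons, Ex]
    simp only [Fintype.sum_prod_type, prefProb, wt]
    rw [Finset.sum_eq_single s]
    · simp [← Finset.mul_sum, ← Finset.sum_mul, pmf_sum_toReal]
    · intro b _ hb; simp [hb]
    · simp
  | succ n ih =>
    intro h s
    rw [← (Fin.consEquiv (fun _ : Fin (n + 1 + 1) => G.Move)).sum_comp, Fintype.sum_prod_type,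
      Fintype.sum_prod_type, Finset.sum_eq_single s]
    · simp only [Ex, Fintype.sum_prod_type]
      refine Finset.sum_congr rfl fun a _ => Finset.sum_congr rfl fun b _ => ?_
      simp only [← ih, Finset.mul_sum]
      rw [Finset.sum_comm]
      refine Finset.sum_congr rfl fun w _ => ?_
      have hl : List.ofFn (fun i : Fin (n + 1) =>
          (Fin.cons (α := fun _ => G.Move) (s, a, b) w : Fin (n + 2) → G.Move) i.castSucc) =
          (s, a, b) :: List.ofFn fun i : Fin n => w i.castSucc := by
        rw [List.ofFn_succ]
        simp
      have hl2 : (Fin.cons (α := fun _ => G.Move) (s, a, b) w : Fin (n + 2) → G.Move)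
          (Fin.last (n + 1)) = w (Fin.last n) := by
        rw [← Fin.succ_last, Fin.cons_succ]
      simp only [Fin.consEquiv, Equiv.coe_fn_mk, hl, hl2, List.ofFn_cons, toReal_prefProb_cons,
        if_true, Finset.sum_mul, List.append_assoc, List.singleton_append, mul_assoc]
    · intro b _ hb
      refine Finset.sum_eq_zero fun x _ => Finset.sum_eq_zero fun w _ => ?_
      simp [Fin.consEquiv, toReal_prefProb_cons, hb]
    · simp

/-- For a process `x` with increments bounded by `C` that is a supermartingale as long as the
state stays in the closed set `X`, the fourth moment of the positive part grows at most
quadratically in time. -/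
lemma Ex_fourth_le (σ1 : G.Strategy1) (σ2 : G.Strategy2) (X : Set G.S) (x : G.Hist → G.S → ℝ)
    (C : ℝ) (N : ℕ)
    (hX : ∀ h, ∀ s ∈ X, ∀ y, wt σ1 σ2 h s y ≠ 0 → y.2.2 ∈ X)
    (hd : ∀ h s, h.length < N → ∀ y : G.A × G.A × G.S,
      |x (h ++ [(s, y.1, y.2.1)]) y.2.2 - x h s| ≤ C)
    (hdrift : ∀ h, ∀ s ∈ X,
      ∑ y, wt σ1 σ2 h s y * (x (h ++ [(s, y.1, y.2.1)]) y.2.2 - x h s) ≤ 0) (n : ℕ) :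
    ∀ h, ∀ s ∈ X, h.length + n ≤ N →
      Ex σ1 σ2 n h s (fun h s => max (x h s) 0 ^ 4) ≤
        max (x h s) 0 ^ 4 + 8 * n * C ^ 2 * max (x h s) 0 ^ 2 + 4 * n ^ 2 * C ^ 4 := by
  induction n with
  | zero => intro h s _ _; simp [Ex]
  | succ n ih =>
    intro h s hs hN
    rw [Ex]
    set u := max (x h s) 0 with hu
    have hu0 : 0 ≤ u := le_max_right _ _
    set d : G.A × G.A × G.S → ℝ := fun y => x (h ++ [(s, y.1, y.2.1)]) y.2.2 - x h s with hdd
    have pt : ∀ y, wt σ1 σ2 h s y *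
        Ex σ1 σ2 n (h ++ [(s, y.1, y.2.1)]) y.2.2 (fun h s => max (x h s) 0 ^ 4) ≤
        wt σ1 σ2 h s y * (u ^ 4 + 8 * (n + 1) * C ^ 2 * u ^ 2 + 4 * (n + 1) ^ 2 * C ^ 4) +
        (4 * u ^ 3 + 16 * n * C ^ 2 * u) * (wt σ1 σ2 h s y * d y) := by
      intro y
      by_cases hw : wt σ1 σ2 h s y = 0
      · simp [hw]
      have h1 := ih (h ++ [(s, y.1, y.2.1)]) y.2.2 (hX h s hs y hw) (by simp; omega)
      have hdy : |d y| ≤ C := hd h s (by omega) y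
      have hxy : x (h ++ [(s, y.1, y.2.1)]) y.2.2 = x h s + d y := by simp [hdd]
      rw [hxy] at h1
      set v := max (x h s + d y) 0 with hv
      have hv0 : 0 ≤ v := le_max_right _ _
      have hvu : v ^ 2 ≤ (u + d y) ^ 2 := by
        rw [sq_le_sq, abs_of_nonneg hv0]
        refine max_le ((add_le_add_left (le_max_left _ _) _).trans (le_abs_self _)) (abs_nonneg _)
      have hC0 : 0 ≤ C := (abs_nonneg _).trans hdy
      have hd2 : d y ^ 2 ≤ C ^ 2 := sq_le_sq' (abs_le.1 hdy).1 (abs_le.1 hdy).2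
      have hv2 : v ^ 2 ≤ u ^ 2 + 2 * u * d y + C ^ 2 := by nlinarith
      have hv4 : v ^ 4 ≤ u ^ 4 + 4 * u ^ 3 * d y + 8 * C ^ 2 * u ^ 2 + 3 * C ^ 4 := by
        have e1 : v ^ 4 ≤ (u + d y) ^ 4 := by
          have := pow_le_pow_left₀ (sq_nonneg v) hvu 2
          calc v ^ 4 = (v ^ 2) ^ 2 := by ring
            _ ≤ _ := this
            _ = _ := by ring
        have e2 : u * d y ^ 3 ≤ u * C ^ 3 := by
          refine mul_le_mul_of_nonneg_left ?_ hu0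
          calc d y ^ 3 ≤ |d y| ^ 3 := by rw [← abs_pow]; exact le_abs_self _
            _ ≤ C ^ 3 := by gcongr
        have e3 : d y ^ 4 ≤ C ^ 4 := by
          calc d y ^ 4 = (d y ^ 2) ^ 2 := by ring
            _ ≤ (C ^ 2) ^ 2 := by gcongr
            _ = _ := by ring
        have e4 : u ^ 2 * d y ^ 2 ≤ u ^ 2 * C ^ 2 := by gcongr
        have e5 : 0 ≤ C ^ 2 * (u - C) ^ 2 := by positivity
        nlinarith
      have hw0 := wt_nonneg σ1 σ2 h s y
      have : Ex σ1 σ2 n (h ++ [(s, y.1, y.2.1)]) y.2.2 (fun h s => max (x h s) 0 ^ 4) ≤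
          (u ^ 4 + 8 * (n + 1) * C ^ 2 * u ^ 2 + 4 * (n + 1) ^ 2 * C ^ 4) +
          (4 * u ^ 3 + 16 * n * C ^ 2 * u) * d y := by
        have e6 : 8 * n * C ^ 2 * v ^ 2 ≤ 8 * n * C ^ 2 * (u ^ 2 + 2 * u * d y + C ^ 2) := by gcongr
        have e7 : 0 ≤ C ^ 4 := by positivity
        nlinarith
      calc _ ≤ wt σ1 σ2 h s y * _ := mul_le_mul_of_nonneg_left this hw0
        _ = _ := by ring
    refine (Finset.sum_le_sum fun y _ => pt y).trans ?_
    rw [Finset.sum_add_distrib, ← Finset.sum_mul, sum_wt, ← Finset.mul_sum, one_mul]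
    have : (4 * u ^ 3 + 16 * n * C ^ 2 * u) * ∑ y, wt σ1 σ2 h s y * d y ≤ 0 :=
      mul_nonpos_of_nonneg_of_nonpos (by positivity) (hdrift h s hs)
    push_cast
    linarith

/-- The length-`n` history of a play. -/
def hist (ρ : G.Play) (n : ℕ) : G.Hist := List.ofFn fun i : Fin n => ρ i.1

lemma prOuter_ge_le (σ1 : G.Strategy1) (σ2 : G.Strategy2) (s : G.S) (x : G.Hist → G.S → ℝ)
    (n : ℕ) (θ : ℝ) (hθ : 0 < θ) :
    prOuter σ1 σ2 s {ρ | θ ≤ x (hist ρ n) (ρ n).1} ≤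
      ENNReal.ofReal (Ex σ1 σ2 n [] s (fun h s => max (x h s) 0 ^ 4) / θ ^ 4) := by
  refine (prOuter_le_mass σ1 σ2 s (n + 1) _).trans ?_
  rw [← sum_prefProb_eq_Ex, Finset.sum_div, ENNReal.ofReal_sum_of_nonneg]
  swap
  · intro w _; positivity
  refine Finset.sum_le_sum fun w _ => ?_
  split_ifs with hne
  · obtain ⟨ρ, hρ, hx⟩ := hne
    have h1 : hist ρ n = List.ofFn fun i : Fin n => w i.castSucc := by
      unfold hist; congr 1; ext1 i; exact hρ i.castSucc
    have h2 : ρ n = w (Fin.last n) := hρ (Fin.last n)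
    simp only [Set.mem_ofPred_eq, h1, h2] at hx
    refine (ENNReal.ofReal_toReal (prefProb_ne_top σ1 σ2 (List.ofFn w) [] s)).symm.le.trans ?_
    refine ENNReal.ofReal_le_ofReal ?_
    rw [mul_div_assoc]
    refine le_mul_of_one_le_right ENNReal.toReal_nonneg ?_
    rw [one_le_div (by positivity), List.nil_append]
    exact pow_le_pow_left₀ hθ.le (hx.trans (le_max_left _ _)) 4
  · exact zero_le

/-! ### The rank function given by the fixpoint -/

lemma gfpS_mono {α : Type*} {f g : Set α → Set α} (h : ∀ Z, f Z ⊆ g Z) : gfpS f ⊆ gfpS g :=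
  Set.sUnion_subset_sUnion fun Z hZ => Set.Subset.trans hZ (h Z)

lemma lfpS_mono {α : Type*} {f g : Set α → Set α} (h : ∀ Z, f Z ⊆ g Z) : lfpS f ⊆ lfpS g :=
  Set.sInter_subset_sInter fun Z hZ => Set.Subset.trans (h Z) hZ

lemma gfpS_subset {α : Type*} {f : Set α → Set α} (hf : Monotone f) : gfpS f ⊆ f (gfpS f) := by
  rintro s ⟨Z, hZ, hs⟩
  exact hf (Set.subset_sUnion_of_mem (show Z ∈ {X | X ⊆ f X} from hZ)) (hZ hs)

lemma allow1_mono (s : G.S) {X X' : Set G.S} (hX : X ⊆ X') : G.allow1 s X ⊆ G.allow1 s X' :=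
  fun _ ha => ⟨ha.1, fun b hb => (ha.2 b hb).trans hX⟩

lemma ASP_mono {X X' Y Y' Z Z' : Set G.S} (hX : X ⊆ X') (hY : Y ⊆ Y') (hZ : Z ⊆ Z') :
    G.ASP X Y Z ⊆ G.ASP X' Y' Z' := by
  rintro s ⟨a, ha, hb⟩
  refine ⟨a, allow1_mono s hX ha, fun b hb1 hb2 => ?_⟩
  have hnb : b ∉ G.bad2 s X Y := by
    rintro ⟨_, a', ha', h⟩
    exact hb2 ⟨hb1, a', allow1_mono s hX ha', h.mono (Set.inter_subset_inter_right _ hY)⟩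
  exact ⟨(hb b hb1 hnb).1.trans hZ, (hb b hb1 hnb).2⟩

/-- The stages of the least fixpoint in `Y` rank the states of `X*`: the good action either earns
reward one without increasing the rank, or the opponent's move allows player 1 to decrease the
rank with positive probability by some other safe action. -/
lemma exists_rank (G : CGS) : ∃ (rk : G.S → ℕ) (L : ℕ), (∀ s ∈ G.Xstar, rk s ≤ L) ∧
    ∀ s ∈ G.Xstar, ∃ a ∈ G.allow1 s G.Xstar, ∀ b ∈ G.moves2 s,
      (∃ a' ∈ G.allow1 s G.Xstar, ∃ t, G.trans s a' b t ≠ 0 ∧ rk t < rk s) ∨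
      (G.reward s a b = 1 ∧ ∀ t, G.trans s a b t ≠ 0 → rk t ≤ rk s) := by
  set X := G.Xstar with hXdef
  set F : Set G.S → Set G.S := fun Y => gfpS fun Z => G.ASP X Y Z with hF
  have hFmono : Monotone F := fun Y Y' h =>
    gfpS_mono fun Z => ASP_mono subset_rfl h subset_rfl
  have hXF : X ⊆ lfpS F := by
    rintro s ⟨W, hW, hs⟩
    have hWX : W ⊆ X := Set.subset_sUnion_of_mem hW
    exact lfpS_mono (fun Y => gfpS_mono fun Z => ASP_mono hWX subset_rfl subset_rfl) (hW hs)
  have hYmono : Monotone fun i => F^[i] ∅ :=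
    hFmono.monotone_iterate_of_le_map (Set.empty_subset _)
  obtain ⟨L, hL⟩ := WellFoundedGT.monotone_chain_condition ⟨fun i => F^[i] ∅, hYmono⟩
  have hXL : X ⊆ F^[L] ∅ := by
    refine hXF.trans (Set.sInter_subset_of_mem ?_)
    have h1 : F^[L] ∅ = F^[L + 1] ∅ := hL (L + 1) (Nat.le_succ L)
    rw [Function.iterate_succ_apply'] at h1
    exact h1.symm.subset
  let rk : G.S → ℕ := fun s => if h : ∃ i, s ∈ F^[i] ∅ then Nat.find h else 0
  have hrk : ∀ {s i}, s ∈ F^[i] ∅ → rk s ≤ i := by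
    intro s i h
    have h' : ∃ i, s ∈ F^[i] ∅ := ⟨i, h⟩
    simp only [rk, dif_pos h']
    exact Nat.find_min' h' h
  have hrk2 : ∀ s ∈ X, s ∈ F^[rk s] ∅ := by
    intro s h
    have h' : ∃ i, s ∈ F^[i] ∅ := ⟨L, hXL h⟩
    simp only [rk, dif_pos h']
    exact Nat.find_spec h'
  refine ⟨rk, L, fun s hs => hrk (hXL hs), fun s hs => ?_⟩
  have hsr := hrk2 s hs
  obtain ⟨i, hi⟩ : ∃ i, rk s = i + 1 := by
    refine Nat.exists_eq_succ_of_ne_zero fun h0 => ?_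
    rw [h0] at hsr
    exact hsr
  rw [hi, Function.iterate_succ_apply'] at hsr
  obtain ⟨a, ha, hab⟩ := gfpS_subset (fun _ _ h => ASP_mono subset_rfl subset_rfl h) hsr
  refine ⟨a, ha, fun b hb => ?_⟩
  by_cases hbad : b ∈ G.bad2 s X (F^[i] ∅)
  · obtain ⟨_, a', ha', t, ht, htY⟩ := hbad
    exact Or.inl ⟨a', ha', t, (PMF.mem_support_iff _ _).1 ht, by rw [hi]; exact Nat.lt_succ_of_le (hrk htY)⟩
  · obtain ⟨h1, h2⟩ := hab b hb hbad
    refine Or.inr ⟨h2, fun t ht => ?_⟩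
    rw [hi]
    refine hrk ?_
    rw [Function.iterate_succ_apply']
    exact h1 ((PMF.mem_support_iff _ _).2 ht)

/-! ### The potential function and the local strategies -/

/-- Values of the potential (plus one), indexed by the distance of the rank from the top rank. -/
noncomputable def eSeq (q : ℝ) : ℕ → ℝ
  | 0 => 1
  | j + 1 => 1 + eSeq q j ^ 2 * q

lemma one_le_eSeq {q : ℝ} (hq : 0 ≤ q) (j : ℕ) : 1 ≤ eSeq q j := by
  cases j with
  | zero => simp [eSeq]
  | succ j => rw [eSeq]; nlinarith [mul_nonneg (sq_nonneg (eSeq q j)) hq]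

lemma eSeq_mono {q : ℝ} (hq : 1 ≤ q) : Monotone (eSeq q) := by
  refine monotone_nat_of_le_succ fun j => ?_
  have h1 := one_le_eSeq (zero_le_one.trans hq) j
  rw [eSeq]
  nlinarith [mul_nonneg (sq_nonneg (eSeq q j)) (sub_nonneg.2 hq)]

lemma eSeq_mono_left {q q' : ℝ} (hq : 0 ≤ q) (h : q ≤ q') (j : ℕ) : eSeq q j ≤ eSeq q' j := by
  induction j with
  | zero => simp [eSeq]
  | succ j ih =>
    have := one_le_eSeq hq j
    rw [eSeq, eSeq]
    gcongr

/-- The mixture of a point mass at `a0` (weight `1 - ε`) and the uniform distribution on `T`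
(weight `ε`). -/
lemma exists_mix {A : Type} [Fintype A] (T : Finset A) (a0 : A) (ha0 : a0 ∈ T) (ε : ℝ)
    (h0 : 0 ≤ ε) (h1 : ε ≤ 1) : ∃ p : PMF A, (∀ a, p a ≠ 0 → a ∈ T) ∧ 1 - ε ≤ (p a0).toReal ∧
      ∀ a ∈ T, ε / Fintype.card A ≤ (p a).toReal := by
  have hT : (0 : ℝ) < T.card := by exact_mod_cast Finset.card_pos.2 ⟨a0, ha0⟩
  set w : A → ℝ := fun a => (if a = a0 then 1 - ε else 0) + (if a ∈ T then ε / T.card else 0)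
    with hw
  have hw1 : ∀ a, 0 ≤ if a = a0 then 1 - ε else 0 := fun a => by split_ifs <;> linarith
  have hw2 : ∀ a, 0 ≤ if a ∈ T then ε / T.card else 0 := fun a => by split_ifs <;> positivity
  have hw0 : ∀ a, 0 ≤ w a := fun a => add_nonneg (hw1 a) (hw2 a)
  have hsum : ∑ a, w a = 1 := by
    simp only [hw, Finset.sum_add_distrib, Finset.sum_ite_eq', Finset.mem_univ, if_true,
      Finset.sum_ite_mem, Finset.univ_inter, Finset.sum_const, nsmul_eq_mul]
    field_simp
    ring
  refine ⟨PMF.ofFintype (fun a => ENNReal.ofReal (w a)) ?_, ?_, ?_, ?_⟩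
  · rw [← ENNReal.ofReal_sum_of_nonneg fun a _ => hw0 a, hsum, ENNReal.ofReal_one]
  · intro a ha
    by_contra haT
    have : a ≠ a0 := fun h => haT (h ▸ ha0)
    simp [hw, haT, this] at ha
  · rw [PMF.ofFintype_apply, ENNReal.toReal_ofReal (hw0 _)]
    have := hw2 a0
    simp only [hw, if_true]
    linarith
  · intro a ha
    rw [PMF.ofFintype_apply, ENNReal.toReal_ofReal (hw0 _)]
    have h3 : ε / Fintype.card A ≤ ε / T.card := by
      gcongr
      exact Finset.card_le_univ T
    have := hw1 a
    simp only [hw, if_pos ha]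
    linarith

/-- A uniform positive lower bound for the nonzero transition probabilities. -/
lemma exists_trans_lb (G : CGS) : ∃ c : ℝ, 0 < c ∧ c ≤ 1 ∧
    ∀ s a b t, G.trans s a b t ≠ 0 → c ≤ (G.trans s a b t).toReal := by
  have hne : Nonempty (G.Move × G.S) := ⟨(nonempty_move (G := G)).some, G.nonemptyS.some⟩
  let f : G.Move × G.S → ℝ := fun y =>
    if G.trans y.1.1 y.1.2.1 y.1.2.2 y.2 = 0 then 1 else
      (G.trans y.1.1 y.1.2.1 y.1.2.2 y.2).toReal
  obtain ⟨y0, hy0⟩ := Finite.exists_min f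
  refine ⟨min (f y0) 1, ?_, min_le_right _ _, fun s a b t ht => ?_⟩
  · refine lt_min ?_ one_pos
    simp only [f]
    split_ifs with h
    · exact one_pos
    · exact ENNReal.toReal_pos h (PMF.apply_ne_top _ _)
  · refine (min_le_left _ _).trans ((hy0 ((s, a, b), t)).trans ?_)
    simp [f, ht]

/-- For the precision `1 / (k + 1)`: mixed moves `p k` that keep the play in `X*` and a potential
`D k` such that the expected loss in a round exceeds `1 / (k + 1)` by at most the expected increase
of the potential. -/
lemma exists_potential (G : CGS) : ∃ (p : ℕ → G.S → PMF G.A) (D : ℕ → G.S → ℝ),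
    (∀ k s, 0 ≤ D k s) ∧ (∀ s, Monotone fun k => D k s) ∧
    (∀ k s a, p k s a ≠ 0 → a ∈ G.moves1 s) ∧
    (∀ k, ∀ s ∈ G.Xstar, ∀ a, p k s a ≠ 0 → a ∈ G.allow1 s G.Xstar) ∧
    (∀ k, ∀ s ∈ G.Xstar, ∀ b ∈ G.moves2 s, ∑ a, (p k s a).toReal *
      ∑ t, (G.trans s a b t).toReal * (1 - G.reward s a b - D k t + D k s) ≤ 1 / (k + 1)) := by
  obtain ⟨rk, L, hrkL, hrk⟩ := exists_rank G
  obtain ⟨c0, hc0, hc01, hc0t⟩ := exists_trans_lb G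
  have hA : (1 : ℝ) ≤ Fintype.card G.A := by
    have : Nonempty G.A := ⟨(nonempty_move (G := G)).some.2.1⟩
    exact_mod_cast Fintype.card_pos
  have hA0 : (0 : ℝ) < Fintype.card G.A := zero_lt_one.trans_le hA
  set q : ℕ → ℝ := fun k => (k + 1) * (Fintype.card G.A / c0) with hqdef
  have hq1 : ∀ k, 1 ≤ q k := fun k => by
    have h1 : 1 ≤ Fintype.card G.A / c0 := by rw [one_le_div hc0]; linarith
    have h2 : (1 : ℝ) ≤ k + 1 := by simp
    exact one_le_mul_of_one_le_of_one_le h2 h1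
  have hq0 : ∀ k, 0 ≤ q k := fun k => zero_le_one.trans (hq1 k)
  set D : ℕ → G.S → ℝ := fun k s => eSeq (q k) (L - rk s) - 1 with hD
  have hD0 : ∀ k s, 0 ≤ D k s := fun k s => sub_nonneg.2 (one_le_eSeq (hq0 k) _)
  have hex : ∀ (k : ℕ) (s : G.S), ∃ p : PMF G.A, (∀ a, p a ≠ 0 → a ∈ G.moves1 s) ∧
      (s ∈ G.Xstar → (∀ a, p a ≠ 0 → a ∈ G.allow1 s G.Xstar) ∧ ∀ b ∈ G.moves2 s,
        ∑ a, (p a).toReal * ∑ t, (G.trans s a b t).toReal *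
          (1 - G.reward s a b - D k t + D k s) ≤ 1 / (k + 1)) := by
    intro k s
    by_cases hs : s ∈ G.Xstar
    swap
    · obtain ⟨a, ha⟩ := G.moves1_nonempty s
      refine ⟨PMF.pure a, fun a' h => ?_, fun h => absurd h hs⟩
      have : a' = a := by by_contra hne; simp [PMF.pure_apply, hne] at h
      exact this ▸ ha
    obtain ⟨a0, ha0, hgood⟩ := hrk s hs
    set ee := eSeq (q k) (L - rk s) with hee
    have hee1 : 1 ≤ ee := one_le_eSeq (hq0 k) _
    have hee0 : 0 < ee := zero_lt_one.trans_le hee1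
    set η : ℝ := 1 / (k + 1) with hη
    have hη0 : 0 < η := by positivity
    have hη1 : η ≤ 1 := by rw [hη, div_le_one (by positivity)]; simp
    obtain ⟨p, hp1, hp2, hp3⟩ := exists_mix (G.allow1 s G.Xstar).toFinset a0
      (Set.mem_toFinset.2 ha0) (η / ee) (by positivity)
      ((div_le_one hee0).2 (hη1.trans hee1))
    have hpa : ∀ a, p a ≠ 0 → a ∈ G.allow1 s G.Xstar := fun a h => Set.mem_toFinset.1 (hp1 a h)
    refine ⟨p, fun a h => (hpa a h).1, fun _ => ⟨hpa, fun b hb => ?_⟩⟩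
    have hr : ∀ a, 0 ≤ G.reward s a b := fun a => by
      rcases G.reward_bool s a b with h | h <;> simp [h]
    have hDs : D k s = ee - 1 := rfl
    have hv : ∀ a, ∑ t, (G.trans s a b t).toReal * (1 - G.reward s a b - D k t + D k s) ≤
        ee - ∑ t, (G.trans s a b t).toReal * D k t := by
      intro a
      have h1 : ∀ t, (G.trans s a b t).toReal * (1 - G.reward s a b - D k t + D k s) ≤
          (G.trans s a b t).toReal * ee - (G.trans s a b t).toReal * D k t := by
        intro t
        rw [← mul_sub]
        refine mul_le_mul_of_nonneg_left ?_ ENNReal.toReal_nonneg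
        linarith [hr a]
      refine (Finset.sum_le_sum fun t _ => h1 t).trans ?_
      rw [Finset.sum_sub_distrib, ← Finset.sum_mul, pmf_sum_toReal, one_mul]
    have hDsum : ∀ a, 0 ≤ ∑ t, (G.trans s a b t).toReal * D k t := fun a =>
      Finset.sum_nonneg fun t _ => mul_nonneg ENNReal.toReal_nonneg (hD0 k t)
    rcases hgood b hb with ⟨a', ha', t', ht', hlt⟩ | ⟨hrew, hstay⟩
    · -- Exploration moves to a state of smaller rank often enough to pay for a loss of one.
      have hDt : ee ^ 2 * q k ≤ D k t' := by
        have h1 : L - rk s + 1 ≤ L - rk t' := by have := hrkL s hs; omega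
        have h2 := eSeq_mono (hq1 k) h1
        rw [eSeq] at h2
        simp only [hD]
        linarith
      have hb1 : ∑ a, (p a).toReal * ∑ t, (G.trans s a b t).toReal * D k t ≥ ee := by
        calc ee = (η / ee / Fintype.card G.A) * (c0 * (ee ^ 2 * q k)) := by
              simp only [hη, hqdef]; field_simp
          _ ≤ (p a').toReal * ((G.trans s a' b t').toReal * D k t') := by
              gcongr
              · exact hp3 a' (Set.mem_toFinset.2 ha')
              · exact hc0t s a' b t' ht'
          _ ≤ (p a').toReal * ∑ t, (G.trans s a' b t).toReal * D k t := by
              refine mul_le_mul_of_nonneg_left ?_ ENNReal.toReal_nonneg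
              exact Finset.single_le_sum
                (f := fun t => (G.trans s a' b t).toReal * D k t)
                (fun t _ => mul_nonneg ENNReal.toReal_nonneg (hD0 k t)) (Finset.mem_univ t')
          _ ≤ _ := Finset.single_le_sum
                (f := fun a => (p a).toReal * ∑ t, (G.trans s a b t).toReal * D k t)
                (fun a _ => mul_nonneg ENNReal.toReal_nonneg (hDsum a)) (Finset.mem_univ a')
      calc _ ≤ ∑ a, (p a).toReal * (ee - ∑ t, (G.trans s a b t).toReal * D k t) :=
            Finset.sum_le_sum fun a _ => mul_le_mul_of_nonneg_left (hv a) ENNReal.toReal_nonneg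
        _ = ee - ∑ a, (p a).toReal * ∑ t, (G.trans s a b t).toReal * D k t := by
            simp only [mul_sub, Finset.sum_sub_distrib, ← Finset.sum_mul, pmf_sum_toReal, one_mul]
        _ ≤ η := by linarith
    · -- Otherwise only the exploration, of probability at most `η / ee`, can cost anything.
      have hva0 : ∑ t, (G.trans s a0 b t).toReal * (1 - G.reward s a0 b - D k t + D k s) ≤ 0 := by
        refine Finset.sum_nonpos fun t _ => ?_
        by_cases ht : G.trans s a0 b t = 0
        · simp [ht]
        · refine mul_nonpos_of_nonneg_of_nonpos ENNReal.toReal_nonneg ?_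
          have h1 : L - rk s ≤ L - rk t := Nat.sub_le_sub_left (hstay t ht) L
          have h2 := eSeq_mono (hq1 k) h1
          rw [hrew]
          simp only [hD]
          linarith
      rw [← Finset.add_sum_erase _ _ (Finset.mem_univ a0)]
      have h3 : ∑ a ∈ Finset.univ.erase a0, (p a).toReal * ∑ t, (G.trans s a b t).toReal *
          (1 - G.reward s a b - D k t + D k s) ≤
          ∑ a ∈ Finset.univ.erase a0, (p a).toReal * ee :=
        Finset.sum_le_sum fun a _ => mul_le_mul_of_nonneg_left
          ((hv a).trans (by linarith [hDsum a])) ENNReal.toReal_nonneg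
      have h4 : ∑ a ∈ Finset.univ.erase a0, (p a).toReal = 1 - (p a0).toReal := by
        rw [← pmf_sum_toReal p, ← Finset.add_sum_erase _ _ (Finset.mem_univ a0)]; ring
      rw [← Finset.sum_mul, h4] at h3
      have h5 : (1 - (p a0).toReal) * ee ≤ η := by
        calc _ ≤ (η / ee) * ee := by gcongr; linarith
          _ = η := by field_simp
      have h6 := mul_nonpos_of_nonneg_of_nonpos
        (ENNReal.toReal_nonneg (a := p a0)) hva0
      linarith
  choose p hp using hex
  refine ⟨p, D, hD0, fun s k k' h => ?_, fun k s => (hp k s).1, fun k s hs => ((hp k s).2 hs).1,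
    fun k s hs => ((hp k s).2 hs).2⟩
  have : q k ≤ q k' := by simp only [hqdef]; gcongr
  have := eSeq_mono_left (hq0 k) this (L - rk s)
  simp only [hD]
  linarith

/-! ### Slowing down the precision and concluding -/

/-- A reparametrization tending to infinity along which `M` grows slowly. -/
lemma exists_slow (M : ℕ → ℝ) (hM : 0 < M 0) : ∃ κ : ℕ → ℕ, Monotone κ ∧
    Tendsto κ atTop atTop ∧ ∀ n, M (κ n) ^ 4 ≤ M 0 ^ 4 * √((n : ℝ) + 1) := by
  let P : ℕ → ℕ → Prop := fun n k => M k ^ 4 ≤ M 0 ^ 4 * √((n : ℝ) + 1)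
  have hM4 : 0 < M 0 ^ 4 := by positivity
  have hP0 : ∀ n, P n 0 := fun n => by
    refine le_mul_of_one_le_right hM4.le ?_
    rw [Real.one_le_sqrt]; simp
  have hspec : ∀ n, P n (Nat.findGreatest (P n) n) := fun n =>
    Nat.findGreatest_spec (Nat.zero_le n) (hP0 n)
  refine ⟨fun n => Nat.findGreatest (P n) n, fun n m h => ?_, ?_, hspec⟩
  · refine Nat.le_findGreatest ((Nat.findGreatest_le n).trans h) ((hspec n).trans ?_)
    gcongr
  · refine tendsto_atTop.2 fun k => ?_
    have ht : Tendsto (fun n : ℕ => M 0 ^ 4 * √((n : ℝ) + 1)) atTop atTop :=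
      (Real.tendsto_sqrt_atTop.comp
        (tendsto_atTop_add_const_right _ _ tendsto_natCast_atTop_atTop)).const_mul_atTop hM4
    filter_upwards [ht.eventually_ge_atTop (M k ^ 4), eventually_ge_atTop k] with n h1 h2
    exact Nat.le_findGreatest h2 h1

lemma summable_sqrt_div : Summable fun n : ℕ => √((n : ℝ) + 1 + 1) / ((n : ℝ) + 1) ^ 2 := by
  have h := (summable_nat_add_iff 1).2
    (Real.summable_one_div_nat_rpow.2 (by norm_num : (1 : ℝ) < 3 / 2))
  refine Summable.of_nonneg_of_le (fun n => by positivity) (fun n => ?_) (h.mul_left 2)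
  have hn : (0 : ℝ) < n + 1 := by positivity
  have h1 : √((n : ℝ) + 1 + 1) ≤ 2 * √((n : ℝ) + 1) := by
    rw [Real.sqrt_le_left (by positivity), mul_pow, Real.sq_sqrt hn.le]
    linarith
  have h2 : ((n : ℝ) + 1) ^ 2 = √((n : ℝ) + 1) * ((n : ℝ) + 1) ^ (3 / 2 : ℝ) := by
    rw [Real.sqrt_eq_rpow, ← Real.rpow_add hn, ← Real.rpow_natCast]
    norm_num
  have h3 : (0 : ℝ) < √((n : ℝ) + 1) := Real.sqrt_pos.2 hn
  push_cast
  calc _ ≤ 2 * √((n : ℝ) + 1) / ((n : ℝ) + 1) ^ 2 := by gcongr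
    _ = _ := by rw [h2]; field_simp

/-- Total loss (one minus reward) along a history. -/
noncomputable def loss (h : G.Hist) : ℝ :=
  (h.map fun m => 1 - G.reward m.1 m.2.1 m.2.2).sum

lemma loss_hist (ρ : G.Play) (n : ℕ) :
    loss (hist ρ n) = n - ∑ i ∈ Finset.range n, G.reward (ρ i).1 (ρ i).2.1 (ρ i).2.2 := by
  unfold loss hist
  rw [List.map_ofFn, List.sum_ofFn]
  simp only [Function.comp]
  rw [Fin.sum_univ_eq_sum_range (fun i => 1 - G.reward (ρ i).1 (ρ i).2.1 (ρ i).2.2),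
    Finset.sum_sub_distrib]
  simp

lemma avg_le_one (ρ : G.Play) (n : ℕ) : G.avg ρ n ≤ 1 := by
  unfold avg
  refine div_le_one_of_le₀ ?_ (Nat.cast_nonneg n)
  calc _ ≤ ∑ i ∈ Finset.range n, (1 : ℝ) := Finset.sum_le_sum fun i _ => by
        rcases G.reward_bool (ρ i).1 (ρ i).2.1 (ρ i).2.2 with h | h <;> simp [h]
    _ = n := by simp

lemma one_le_limInfAvg (ρ : G.Play)
    (h : ∀ ε > 0, ∀ᶠ n : ℕ in atTop, loss (hist ρ n) ≤ ε * n) : 1 ≤ G.limInfAvg ρ := by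
  refine le_of_forall_lt fun c hc => ?_
  obtain ⟨c', hc', hc1⟩ := exists_between hc
  refine hc'.trans_le (le_liminf_of_le ?_ ?_)
  · exact (isBoundedUnder_of ⟨1, avg_le_one ρ⟩).isCoboundedUnder_ge
  · filter_upwards [h (1 - c') (by linarith), eventually_gt_atTop 0] with n hn hn0
    have hn0' : (0 : ℝ) < n := by exact_mod_cast hn0
    rw [loss_hist] at hn
    rw [avg, le_div_iff₀ hn0']
    linarith

/-- The precisions `1 / (κ n + 1)` of the first `n` rounds, summed. -/
noncomputable def budget (κ : ℕ → ℕ) (n : ℕ) : ℝ :=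
  ∑ i ∈ Finset.range n, 1 / ((κ i : ℝ) + 1)

/-- The supermartingale: loss minus the summed precisions minus the current potential. -/
noncomputable def proc (κ : ℕ → ℕ) (D : ℕ → G.S → ℝ) (h : G.Hist) (s : G.S) : ℝ :=
  loss h - budget κ h.length - D (κ h.length) s

lemma proc_step (κ : ℕ → ℕ) (D : ℕ → G.S → ℝ) (h : G.Hist) (s : G.S)
    (y : G.A × G.A × G.S) :
    proc κ D (h ++ [(s, y.1, y.2.1)]) y.2.2 - proc κ D h s =
      1 - G.reward s y.1 y.2.1 - 1 / ((κ h.length : ℝ) + 1) - D (κ (h.length + 1)) y.2.2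
        + D (κ h.length) s := by
  simp only [proc, loss, budget, List.map_append, List.sum_append, List.map_cons, List.map_nil,
    List.sum_cons, List.sum_nil, List.length_append, List.length_cons, List.length_nil,
    Finset.sum_range_succ, zero_add]
  ring

end CGS

open CGS in
/-- Lemma 3 of the paper: `X* ⊆ Almost₁(LimInfAvg(1))`. -/
theorem stmt2 (G : CGS) : G.Xstar ⊆ G.Almost1 (G.evLimInfAvgGe 1) := by
  intro s0 hs0
  obtain ⟨p, D, hD0, hDmono, hp1, hpX, hdr⟩ := exists_potential G
  set M : ℕ → ℝ := fun k => 1 + ∑ s, D k s with hM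
  have hM1 : ∀ k, 1 ≤ M k := fun k =>
    le_add_of_nonneg_right (Finset.sum_nonneg fun s _ => hD0 k s)
  have hMmono : Monotone M := fun k k' h =>
    add_le_add_right (Finset.sum_le_sum fun s _ => hDmono s h) _
  have hDM : ∀ k s, D k s + 1 ≤ M k := fun k s => by
    have := Finset.single_le_sum (f := fun s => D k s) (fun s _ => hD0 k s) (Finset.mem_univ s)
    simp only [hM]
    linarith
  obtain ⟨κ, hκm, hκt, hκ⟩ := exists_slow M (zero_lt_one.trans_le (hM1 0))
  refine ⟨⟨fun h s => p (κ h.length) s, fun h s a => hp1 _ s a⟩, fun σ2 => ?_⟩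
  set σ1 : G.Strategy1 := ⟨fun h s => p (κ h.length) s, fun h s a => hp1 _ s a⟩ with hσ1
  have hr : ∀ s a b, 0 ≤ G.reward s a b ∧ G.reward s a b ≤ 1 := fun s a b => by
    rcases G.reward_bool s a b with h | h <;> simp [h]
  have hη : ∀ k : ℕ, 0 ≤ 1 / ((k : ℝ) + 1) ∧ 1 / ((k : ℝ) + 1) ≤ 1 := fun k =>
    ⟨by positivity, by rw [div_le_one (by positivity)]; simp⟩
  have hclosed : ∀ h, ∀ s ∈ G.Xstar, ∀ y, wt σ1 σ2 h s y ≠ 0 → y.2.2 ∈ G.Xstar := by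
    intro h s hs y hy
    have h1 : σ1.play h s y.1 ≠ 0 := fun h0 => hy (by simp [wt, h0])
    have h2 : σ2.play h s y.2.1 ≠ 0 := fun h0 => hy (by simp [wt, h0])
    have h3 : G.trans s y.1 y.2.1 y.2.2 ≠ 0 := fun h0 => hy (by simp [wt, h0])
    exact (hpX _ s hs y.1 h1).2 _ (σ2.play_mem _ _ _ h2) ((PMF.mem_support_iff _ _).2 h3)
  have hbdd : ∀ N h s, h.length < N → ∀ y : G.A × G.A × G.S,
      |proc κ D (h ++ [(s, y.1, y.2.1)]) y.2.2 - proc κ D h s| ≤ M (κ N) := by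
    intro N h s hN y
    rw [proc_step]
    have h1 := (hDM (κ (h.length + 1)) y.2.2).trans (hMmono (hκm (Nat.succ_le_of_lt hN)))
    have h2 := (hDM (κ h.length) s).trans (hMmono (hκm hN.le))
    have h3 := hD0 (κ (h.length + 1)) y.2.2
    have h4 := hD0 (κ h.length) s
    have h5 := hr s y.1 y.2.1
    have h6 := hη (κ h.length)
    rw [abs_le]
    constructor <;> linarith [h5.1, h5.2, h6.1, h6.2]
  have hdrift : ∀ h, ∀ s ∈ G.Xstar, ∑ y, wt σ1 σ2 h s y *
      (proc κ D (h ++ [(s, y.1, y.2.1)]) y.2.2 - proc κ D h s) ≤ 0 := by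
    intro h s hs
    set k := κ h.length with hk
    have h1 : ∀ y : G.A × G.A × G.S, wt σ1 σ2 h s y *
        (proc κ D (h ++ [(s, y.1, y.2.1)]) y.2.2 - proc κ D h s) ≤
        wt σ1 σ2 h s y * (1 - G.reward s y.1 y.2.1 - D k y.2.2 + D k s) -
          wt σ1 σ2 h s y * (1 / ((k : ℝ) + 1)) := by
      intro y
      rw [← mul_sub, proc_step]
      refine mul_le_mul_of_nonneg_left ?_ (wt_nonneg _ _ _ _ _)
      have := hDmono y.2.2 (hκm (Nat.le_succ h.length))
      simp only [← hk] at this ⊢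
      linarith
    refine (Finset.sum_le_sum fun y _ => h1 y).trans ?_
    rw [Finset.sum_sub_distrib, ← Finset.sum_mul, sum_wt, one_mul, sub_nonpos]
    have h2 : ∑ y, wt σ1 σ2 h s y * (1 - G.reward s y.1 y.2.1 - D k y.2.2 + D k s) =
        ∑ b, (σ2.play h s b).toReal * ∑ a, (p k s a).toReal *
          ∑ t, (G.trans s a b t).toReal * (1 - G.reward s a b - D k t + D k s) := by
      rw [Fintype.sum_prod_type]
      simp only [Fintype.sum_prod_type]
      rw [Finset.sum_comm]
      simp only [Finset.mul_sum, wt]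
      refine Finset.sum_congr rfl fun b _ => Finset.sum_congr rfl fun a _ =>
        Finset.sum_congr rfl fun t _ => ?_
      simp only [hσ1, ← hk]
      ring
    rw [h2]
    calc _ ≤ ∑ b, (σ2.play h s b).toReal * (1 / ((k : ℝ) + 1)) := by
          refine Finset.sum_le_sum fun b _ => ?_
          by_cases hb : σ2.play h s b = 0
          · simp [hb]
          · exact mul_le_mul_of_nonneg_left (hdr k s hs b (σ2.play_mem _ _ _ hb))
              ENNReal.toReal_nonneg
      _ = 1 / ((k : ℝ) + 1) := by rw [← Finset.sum_mul, pmf_sum_toReal, one_mul]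
  -- The deviation events, indexed so that the number of rounds is positive.
  set B : ℕ → ℕ → Set G.Play := fun j n =>
    {ρ | ((n : ℝ) + 1) / (j + 1) ≤ proc κ D (hist ρ (n + 1)) (ρ (n + 1)).1} with hB
  have hBle : ∀ j n, prOuter σ1 σ2 s0 (B j n) ≤ ENNReal.ofReal
      (4 * M 0 ^ 4 * (j + 1) ^ 4 * (√((n : ℝ) + 1 + 1) / ((n : ℝ) + 1) ^ 2)) := by
    intro j n
    refine (prOuter_ge_le σ1 σ2 s0 (proc κ D) (n + 1) _ (by positivity)).trans ?_
    refine ENNReal.ofReal_le_ofReal ?_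
    have h1 := Ex_fourth_le σ1 σ2 G.Xstar (proc κ D) (M (κ (n + 1))) (n + 1) hclosed
      (hbdd (n + 1)) hdrift (n + 1) [] s0 hs0 (by simp)
    have h0 : max (proc κ D [] s0) 0 = 0 :=
      max_eq_right (by simpa [proc, loss, budget] using hD0 _ s0)
    rw [h0] at h1
    have h2 := hκ (n + 1)
    push_cast at h1 h2
    rw [div_le_iff₀ (by positivity)]
    calc _ ≤ 4 * ((n : ℝ) + 1) ^ 2 * M (κ (n + 1)) ^ 4 := by simpa using h1
      _ ≤ 4 * ((n : ℝ) + 1) ^ 2 * (M 0 ^ 4 * √((n : ℝ) + 1 + 1)) := by gcongr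
      _ = _ := by field_simp
  have hnull : ∀ j, prOuter σ1 σ2 s0 (limsup (B j) atTop) = 0 := by
    intro j
    refine MeasureTheory.measure_limsup_atTop_eq_zero ?_
    refine ne_top_of_le_ne_top ?_ (ENNReal.tsum_le_tsum (hBle j))
    exact (summable_sqrt_div.mul_left _).tsum_ofReal_ne_top
  refine pr_eq_one_of_compl _ _ _ _ (le_antisymm ?_ zero_le)
  have hsub : (G.evLimInfAvgGe 1)ᶜ ⊆ ⋃ j, limsup (B j) atTop := by
    intro ρ hρ
    by_contra hno
    refine hρ (one_le_limInfAvg ρ fun ε hε => ?_)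
    have hdev : ∀ j : ℕ, ∀ᶠ n in atTop, ρ ∉ B j n := by
      intro j
      have h1 : ρ ∉ limsup (B j) atTop := fun h => hno (Set.mem_iUnion.2 ⟨j, h⟩)
      rw [mem_limsup_iff_frequently_mem, not_frequently] at h1
      exact h1
    obtain ⟨j, hj⟩ := exists_nat_one_div_lt (show 0 < ε / 3 by positivity)
    have hces : ∀ᶠ n : ℕ in atTop, budget κ n ≤ ε / 3 * n := by
      have ht : Tendsto (fun i => 1 / ((κ i : ℝ) + 1)) atTop (nhds 0) :=
        tendsto_one_div_add_atTop_nhds_zero_nat.comp hκt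
      filter_upwards [ht.cesaro.eventually_lt_const (show 0 < ε / 3 by positivity),
        eventually_gt_atTop 0] with n hn hn0
      have hn0' : (0 : ℝ) < n := by exact_mod_cast hn0
      rw [inv_mul_lt_iff₀ hn0'] at hn
      rw [budget]
      linarith
    have hpot : ∀ᶠ n : ℕ in atTop, M (κ n) ≤ ε / 3 * n := by
      have ht : Tendsto (fun n : ℕ => ε / 3 * √(n : ℝ)) atTop atTop :=
        (Real.tendsto_sqrt_atTop.comp tendsto_natCast_atTop_atTop).const_mul_atTop
          (by positivity)
      filter_upwards [ht.eventually_ge_atTop (M 0 ^ 4 * 2), eventually_ge_atTop 1] with n hn hn1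
      have hn1' : (1 : ℝ) ≤ n := by exact_mod_cast hn1
      have h1 : √((n : ℝ) + 1) ≤ 2 * √(n : ℝ) := by
        rw [Real.sqrt_le_left (by positivity), mul_pow, Real.sq_sqrt (by positivity)]
        linarith
      have h0 : 0 ≤ M 0 ^ 4 := by positivity
      calc M (κ n) ≤ M (κ n) ^ 4 := le_self_pow₀ (hM1 _) (by norm_num)
        _ ≤ M 0 ^ 4 * √((n : ℝ) + 1) := hκ n
        _ ≤ M 0 ^ 4 * (2 * √(n : ℝ)) := by gcongr
        _ = M 0 ^ 4 * 2 * √(n : ℝ) := by ring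
        _ ≤ ε / 3 * √(n : ℝ) * √(n : ℝ) := by gcongr
        _ = ε / 3 * n := by rw [mul_assoc, Real.mul_self_sqrt (by positivity)]
    have hdev' : ∀ᶠ n in atTop, proc κ D (hist ρ n) (ρ n).1 ≤ ε / 3 * n := by
      rw [← map_add_atTop_eq_nat 1, eventually_map]
      filter_upwards [hdev j] with n hn
      have h1 : proc κ D (hist ρ (n + 1)) (ρ (n + 1)).1 < ((n : ℝ) + 1) / (j + 1) :=
        not_le.1 hn
      have h2 : ((n : ℝ) + 1) / (j + 1) = 1 / ((j : ℝ) + 1) * (n + 1) := by ring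
      push_cast
      rw [h2] at h1
      refine h1.le.trans ?_
      gcongr
    filter_upwards [hces, hpot, hdev'] with n h1 h2 h3
    have hlen : (hist ρ n).length = n := by simp [hist]
    simp only [proc, hlen] at h3
    have := hDM (κ n) (ρ n).1
    linarith
  calc prOuter σ1 σ2 s0 (G.evLimInfAvgGe 1)ᶜ
      ≤ prOuter σ1 σ2 s0 (⋃ j, limsup (B j) atTop) := (prOuter σ1 σ2 s0).mono hsub
    _ ≤ 0 := (MeasureTheory.measure_iUnion_null hnull).le
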